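/- A function u ∈ W^{1,∞}(Ω_T) is a solution of u_t = (σ(u_x))_x + b u_x + c u + f in the sense of distributions in Ω_T (i.e., ∫∫_{Ω_T} (u ζ_t − σ(u_x) ζ_x + (b u_x + c u + f) ζ) dx dt = 0 for every ζ ∈ C_c^∞(Ω_T)) if and only if there exists v ∈ W^{1,∞}(Ω_T) such that v_x = u and v_t = σ(u_x) + b u + P_u + F a.e. in Ω_T; moreover, such a function v is unique up to an additive constant. -/

import Mathlib

open MeasureTheory Set
open scoped NNReal

noncomputable section

/-- The open space-time domain `Ω_T = (0,1) × (0,T)`. -/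
def OmegaT (T : ℝ) : Set (ℝ × ℝ) := Ioo (0:ℝ) 1 ×ˢ Ioo (0:ℝ) T

/-- The closed space-time domain `cl Ω_T = [0,1] × [0,T]`. -/
def ClOmegaT (T : ℝ) : Set (ℝ × ℝ) := Icc (0:ℝ) 1 ×ˢ Icc (0:ℝ) T

/-- `F(x,t) = ∫_0^x f(y,t) dy`. -/
def Fint (f : ℝ → ℝ → ℝ) (x t : ℝ) : ℝ := ∫ y in (0:ℝ)..x, f y t

/-- The potential operator `P_u(x,t) = ∫_0^x (c(y,t) - b_y(y,t)) u(y,t) dy`. -/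
def Pot (c bx : ℝ → ℝ → ℝ) (u : ℝ → ℝ → ℝ) (x t : ℝ) : ℝ :=
  ∫ y in (0:ℝ)..x, (c y t - bx y t) * u y t

/-- A stream function `v` for `u`: `v_x = u` and `v_t = σ(u_x) + b u + P_u + F` a.e. in `Ω_T`. -/
def IsStreamFunction (T : ℝ) (sigma : ℝ → ℝ) (b bx c f : ℝ → ℝ → ℝ)
    (u ux : ℝ → ℝ → ℝ) (v : ℝ → ℝ → ℝ) : Prop :=
  (∃ K : ℝ≥0, LipschitzOnWith K (fun p : ℝ × ℝ => v p.1 p.2) (ClOmegaT T)) ∧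
  ∃ vx vt : ℝ → ℝ → ℝ,
    (∀ᵐ p ∂(volume.restrict (OmegaT T)), HasDerivAt (fun y => v y p.2) (vx p.1 p.2) p.1) ∧
    (∀ᵐ p ∂(volume.restrict (OmegaT T)), HasDerivAt (fun τ => v p.1 τ) (vt p.1 p.2) p.2) ∧
    (∀ᵐ p ∂(volume.restrict (OmegaT T)), vx p.1 p.2 = u p.1 p.2) ∧
    (∀ᵐ p ∂(volume.restrict (OmegaT T)),
      vt p.1 p.2 = sigma (ux p.1 p.2) + b p.1 p.2 * u p.1 p.2
        + Pot c bx u p.1 p.2 + Fint f p.1 p.2)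


lemma omegaT_restrict (T : ℝ) : (volume : Measure (ℝ × ℝ)).restrict (OmegaT T) =
    (volume.restrict (Ioo (0:ℝ) 1)).prod (volume.restrict (Ioo (0:ℝ) T)) := by
  rw [OmegaT, Measure.prod_restrict]; rfl

lemma measurableSet_omegaT (T : ℝ) : MeasurableSet (OmegaT T) :=
  measurableSet_Ioo.prod measurableSet_Ioo

lemma isOpen_omegaT (T : ℝ) : IsOpen (OmegaT T) := isOpen_Ioo.prod isOpen_Ioo

lemma omegaT_subset (T : ℝ) : OmegaT T ⊆ ClOmegaT T :=
  Set.prod_mono Ioo_subset_Icc_self Ioo_subset_Icc_self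

lemma isCompact_clOmegaT (T : ℝ) : IsCompact (ClOmegaT T) := isCompact_Icc.prod isCompact_Icc

instance isFinite_omegaT (T : ℝ) : IsFiniteMeasure ((volume : Measure (ℝ × ℝ)).restrict (OmegaT T)) := by
  rw [omegaT_restrict]; infer_instance

lemma ae_tx {T : ℝ} {p : ℝ × ℝ → Prop} (h : ∀ᵐ z ∂(volume.restrict (OmegaT T)), p z) :
    ∀ᵐ t ∂(volume.restrict (Ioo (0:ℝ) T)), ∀ᵐ x ∂(volume.restrict (Ioo (0:ℝ) 1)), p (x, t) := by
  rw [omegaT_restrict] at h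
  have := (Measure.measurePreserving_swap (μ := volume.restrict (Ioo (0:ℝ) T))
    (ν := volume.restrict (Ioo (0:ℝ) 1))).quasiMeasurePreserving.ae h
  exact Measure.ae_ae_of_ae_prod this

lemma ae_xt {T : ℝ} {p : ℝ × ℝ → Prop} (h : ∀ᵐ z ∂(volume.restrict (OmegaT T)), p z) :
    ∀ᵐ x ∂(volume.restrict (Ioo (0:ℝ) 1)), ∀ᵐ t ∂(volume.restrict (Ioo (0:ℝ) T)), p (x, t) := by
  rw [omegaT_restrict] at h
  exact Measure.ae_ae_of_ae_prod h

lemma ac_of_lip {a b : ℝ} (hab : a < b) {C : ℝ≥0} {h : ℝ → ℝ} (hh : LipschitzOnWith C h (Icc a b)) :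
    AbsolutelyContinuousOnInterval h a b := by
  apply LipschitzOnWith.absolutelyContinuousOnInterval (K := C)
  rwa [uIcc_of_le hab.le]

lemma ibp1 {a b : ℝ} (hab : a < b) {h h' φ : ℝ → ℝ} (h1 : AbsolutelyContinuousOnInterval h a b)
    (hd : ∀ᵐ x ∂(volume.restrict (Ioo a b)), HasDerivAt h (h' x) x)
    (hφ : ContDiff ℝ 1 φ) (ha : φ a = 0) (hb : φ b = 0) :
    ∫ x in Ioo a b, h x * deriv φ x = -∫ x in Ioo a b, h' x * φ x := by
  have h2 : AbsolutelyContinuousOnInterval φ a b := by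
    obtain ⟨K, hK⟩ := (hφ.contDiffOn (s := Icc a b)).exists_lipschitzOnWith one_ne_zero (convex_Icc a b) isCompact_Icc
    apply LipschitzOnWith.absolutelyContinuousOnInterval (K := K)
    rwa [uIcc_of_le hab.le]
  have := h1.integral_mul_deriv_eq_deriv_mul h2
  rw [ha, hb, intervalIntegral.integral_of_le hab.le, intervalIntegral.integral_of_le hab.le,
    integral_Ioc_eq_integral_Ioo, integral_Ioc_eq_integral_Ioo] at this
  rw [this]
  simp only [mul_zero, sub_self, zero_sub, neg_inj]
  apply integral_congr_ae
  filter_upwards [hd] with x hx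
  rw [hx.deriv]

lemma zx_eq {Z : ℝ × ℝ → ℝ} (hZ : Differentiable ℝ Z) (x t : ℝ) :
    HasDerivAt (fun y => Z (y, t)) (fderiv ℝ Z (x, t) (1, 0)) x := by
  have h := (hZ (x, t)).hasFDerivAt
  have h2 : HasDerivAt (fun y : ℝ => (y, t)) ((1:ℝ), (0:ℝ)) x :=
    (hasDerivAt_id x).prodMk (hasDerivAt_const x t)
  exact h.comp_hasDerivAt x h2

lemma zt_eq {Z : ℝ × ℝ → ℝ} (hZ : Differentiable ℝ Z) (x t : ℝ) :
    HasDerivAt (fun τ => Z (x, τ)) (fderiv ℝ Z (x, t) (0, 1)) t := by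
  have h := (hZ (x, t)).hasFDerivAt
  have h2 : HasDerivAt (fun y : ℝ => (x, y)) ((0:ℝ), (1:ℝ)) t :=
    (hasDerivAt_const t x).prodMk (hasDerivAt_id t)
  exact h.comp_hasDerivAt t h2

lemma integrable_mul_test {T : ℝ} {H φ : ℝ × ℝ → ℝ} (hH : IntegrableOn H (OmegaT T))
    (hφ : Continuous φ) (hc : HasCompactSupport φ) : IntegrableOn (fun p => H p * φ p) (OmegaT T) := by
  obtain ⟨C, hC⟩ := hφ.bounded_above_of_compact_support hc
  exact Integrable.mul_bdd (c := C) hH hφ.aestronglyMeasurable (ae_of_all _ hC)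

/-- Integration by parts in `x`. -/
lemma ibpx {T : ℝ} {H H1 φ : ℝ × ℝ → ℝ} (hH : IntegrableOn H (OmegaT T))
    (hH1 : IntegrableOn H1 (OmegaT T))
    (hL : ∀ t ∈ Ioo (0:ℝ) T, AbsolutelyContinuousOnInterval (fun x => H (x, t)) 0 1)
    (hd : ∀ᵐ p ∂(volume.restrict (OmegaT T)), HasDerivAt (fun y => H (y, p.2)) (H1 p) p.1)
    (hφ : ContDiff ℝ 1 φ) (hc : HasCompactSupport φ) (hs : tsupport φ ⊆ OmegaT T) :
    ∫ p in OmegaT T, H p * fderiv ℝ φ p (1, 0) = - ∫ p in OmegaT T, H1 p * φ p := by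
  have i1 : IntegrableOn (fun p => H p * fderiv ℝ φ p (1, 0)) (OmegaT T) :=
    integrable_mul_test hH ((hφ.continuous_fderiv one_ne_zero).clm_apply continuous_const)
      (hc.fderiv_apply ℝ _)
  have i2 := integrable_mul_test hH1 hφ.continuous hc
  have hd := ae_tx hd
  unfold IntegrableOn at i1 i2
  rw [omegaT_restrict] at i1 i2 ⊢
  rw [integral_prod_symm _ i1, integral_prod_symm _ i2, ← integral_neg]
  apply integral_congr_ae
  filter_upwards [hd, ae_restrict_mem measurableSet_Ioo] with t ht htm
  have hC := hL t htm
  have z0 : ∀ x, x ∉ Ioo (0:ℝ) 1 → φ (x, t) = 0 := fun x hx =>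
    image_eq_zero_of_notMem_tsupport (fun h => hx (hs h).1)
  have := ibp1 (φ := fun x => φ (x, t)) one_pos hC ht (hφ.comp (contDiff_id.prodMk contDiff_const))
    (z0 0 (by simp)) (z0 1 (by simp))
  rw [← this]
  congr 1; ext x
  rw [(zx_eq (hφ.differentiable one_ne_zero) x t).deriv]

/-- Integration by parts in `t`. -/
lemma ibpt {T : ℝ} (hT : 0 < T) {H H1 φ : ℝ × ℝ → ℝ} (hH : IntegrableOn H (OmegaT T))
    (hH1 : IntegrableOn H1 (OmegaT T))
    (hL : ∀ x ∈ Ioo (0:ℝ) 1, AbsolutelyContinuousOnInterval (fun t => H (x, t)) 0 T)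
    (hd : ∀ᵐ p ∂(volume.restrict (OmegaT T)), HasDerivAt (fun y => H (p.1, y)) (H1 p) p.2)
    (hφ : ContDiff ℝ 1 φ) (hc : HasCompactSupport φ) (hs : tsupport φ ⊆ OmegaT T) :
    ∫ p in OmegaT T, H p * fderiv ℝ φ p (0, 1) = - ∫ p in OmegaT T, H1 p * φ p := by
  have i1 : IntegrableOn (fun p => H p * fderiv ℝ φ p (0, 1)) (OmegaT T) :=
    integrable_mul_test hH ((hφ.continuous_fderiv one_ne_zero).clm_apply continuous_const)
      (hc.fderiv_apply ℝ _)
  have i2 := integrable_mul_test hH1 hφ.continuous hc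
  have hd := ae_xt hd
  unfold IntegrableOn at i1 i2
  rw [omegaT_restrict] at i1 i2 ⊢
  rw [integral_prod _ i1, integral_prod _ i2, ← integral_neg]
  apply integral_congr_ae
  filter_upwards [hd, ae_restrict_mem measurableSet_Ioo] with x ht htm
  have hC := hL x htm
  have z0 : ∀ t, t ∉ Ioo (0:ℝ) T → φ (x, t) = 0 := fun t hx =>
    image_eq_zero_of_notMem_tsupport (fun h => hx (hs h).2)
  have := ibp1 (φ := fun t => φ (x, t)) hT hC ht (hφ.comp (contDiff_const.prodMk contDiff_id))
    (z0 0 (by simp)) (z0 T (by simp))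
  rw [← this]
  congr 1; ext t
  rw [(zt_eq (hφ.differentiable one_ne_zero) x t).deriv]

lemma lip_x {T : ℝ} {V : ℝ × ℝ → ℝ} {K : ℝ≥0} (hV : LipschitzOnWith K V (ClOmegaT T)) {t : ℝ}
    (ht : t ∈ Icc (0:ℝ) T) : LipschitzOnWith K (fun x => V (x, t)) (Icc 0 1) := by
  have := hV.comp (g := V) (f := fun x : ℝ => (x, t)) (s := Icc 0 1)
    ((LipschitzWith.prodMk_right t).lipschitzOnWith) (fun x hx => ⟨hx, ht⟩)
  rwa [mul_one] at this

lemma lip_t {T : ℝ} {V : ℝ × ℝ → ℝ} {K : ℝ≥0} (hV : LipschitzOnWith K V (ClOmegaT T)) {x : ℝ}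
    (hx : x ∈ Icc (0:ℝ) 1) : LipschitzOnWith K (fun t => V (x, t)) (Icc 0 T) := by
  have := hV.comp (g := V) (f := fun t : ℝ => (x, t)) (s := Icc 0 T)
    ((LipschitzWith.prodMk_left x).lipschitzOnWith) (fun t ht => ⟨hx, ht⟩)
  rwa [mul_one] at this

lemma cont_integrable {T : ℝ} {H : ℝ × ℝ → ℝ} (h : ContinuousOn H (ClOmegaT T)) :
    IntegrableOn H (OmegaT T) :=
  (h.integrableOn_compact (isCompact_clOmegaT T)).mono_set (omegaT_subset T)

lemma cont_bdd {T : ℝ} {H : ℝ × ℝ → ℝ} (h : ContinuousOn H (ClOmegaT T)) :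
    ∃ M, ∀ᵐ p ∂(volume.restrict (OmegaT T)), |H p| ≤ M := by
  obtain ⟨C, hC⟩ := (isCompact_clOmegaT T).exists_bound_of_continuousOn h
  refine ⟨C, ?_⟩
  filter_upwards [ae_restrict_mem (measurableSet_omegaT T)] with p hp
  exact hC p (omegaT_subset T hp)

lemma bdd_integrable {T : ℝ} {H : ℝ × ℝ → ℝ} (hm : AEStronglyMeasurable H (volume.restrict (OmegaT T)))
    (h : ∃ M, ∀ᵐ p ∂(volume.restrict (OmegaT T)), |H p| ≤ M) : IntegrableOn H (OmegaT T) := by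
  obtain ⟨M, hM⟩ := h
  exact Integrable.of_bound hm M hM

lemma derivx_meas {T : ℝ} {V V1 : ℝ × ℝ → ℝ} {K : ℝ≥0} (hV : LipschitzOnWith K V (ClOmegaT T))
    (hd : ∀ᵐ p ∂(volume.restrict (OmegaT T)), HasDerivAt (fun y => V (y, p.2)) (V1 p) p.1) :
    AEStronglyMeasurable V1 (volume.restrict (OmegaT T)) ∧
    ∀ᵐ p ∂(volume.restrict (OmegaT T)), |V1 p| ≤ K := by
  obtain ⟨U, hU, hE⟩ := hV.extend_real
  constructor
  · have hm : Measurable (fun p : ℝ × ℝ => deriv (fun y => U (y, p.1)) p.2) :=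
      measurable_deriv_with_param (f := fun t y => U (y, t)) (hU.continuous.comp continuous_swap)
    refine ⟨fun p => deriv (fun y => U (y, p.2)) p.1, (hm.comp measurable_swap).stronglyMeasurable, ?_⟩
    filter_upwards [hd, ae_restrict_mem (measurableSet_omegaT T)] with p hp hm
    rw [← hp.deriv]
    apply Filter.EventuallyEq.deriv_eq
    filter_upwards [isOpen_Ioo.mem_nhds hm.1] with y hy
    exact hE (omegaT_subset T ⟨hy, hm.2⟩)
  · filter_upwards [hd, ae_restrict_mem (measurableSet_omegaT T)] with p hp hm
    rw [← hp.deriv]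
    exact norm_deriv_le_of_lipschitzOn (Icc_mem_nhds hm.1.1 hm.1.2) (lip_x hV (Ioo_subset_Icc_self hm.2))

lemma derivt_meas {T : ℝ} {V V1 : ℝ × ℝ → ℝ} {K : ℝ≥0} (hV : LipschitzOnWith K V (ClOmegaT T))
    (hd : ∀ᵐ p ∂(volume.restrict (OmegaT T)), HasDerivAt (fun y => V (p.1, y)) (V1 p) p.2) :
    AEStronglyMeasurable V1 (volume.restrict (OmegaT T)) ∧
    ∀ᵐ p ∂(volume.restrict (OmegaT T)), |V1 p| ≤ K := by
  obtain ⟨U, hU, hE⟩ := hV.extend_real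
  constructor
  · have hm : Measurable (fun p : ℝ × ℝ => deriv (fun y => U (p.1, y)) p.2) :=
      measurable_deriv_with_param (f := fun x y => U (x, y)) hU.continuous
    refine ⟨fun p => deriv (fun y => U (p.1, y)) p.2, hm.stronglyMeasurable, ?_⟩
    filter_upwards [hd, ae_restrict_mem (measurableSet_omegaT T)] with p hp hm
    rw [← hp.deriv]
    apply Filter.EventuallyEq.deriv_eq
    filter_upwards [isOpen_Ioo.mem_nhds hm.2] with y hy
    exact hE (omegaT_subset T ⟨hm.1, hy⟩)
  · filter_upwards [hd, ae_restrict_mem (measurableSet_omegaT T)] with p hp hm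
    rw [← hp.deriv]
    exact norm_deriv_le_of_lipschitzOn (Icc_mem_nhds hm.2.1 hm.2.2) (lip_t hV (Ioo_subset_Icc_self hm.1))

/-- `∫ v_x ζ_t = ∫ v_t ζ_x`. -/
lemma curl_free {T : ℝ} (hT : 0 < T) {V Vx Vt Z : ℝ × ℝ → ℝ} {K : ℝ≥0}
    (hV : LipschitzOnWith K V (ClOmegaT T))
    (hx : ∀ᵐ p ∂(volume.restrict (OmegaT T)), HasDerivAt (fun y => V (y, p.2)) (Vx p) p.1)
    (ht : ∀ᵐ p ∂(volume.restrict (OmegaT T)), HasDerivAt (fun y => V (p.1, y)) (Vt p) p.2)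
    (hZ : ContDiff ℝ 2 Z) (hc : HasCompactSupport Z) (hs : tsupport Z ⊆ OmegaT T) :
    ∫ p in OmegaT T, Vx p * fderiv ℝ Z p (0, 1) = ∫ p in OmegaT T, Vt p * fderiv ℝ Z p (1, 0) := by
  have iV := cont_integrable hV.continuousOn
  have iVx := bdd_integrable (derivx_meas hV hx).1 ⟨_, (derivx_meas hV hx).2⟩
  have iVt := bdd_integrable (derivt_meas hV ht).1 ⟨_, (derivt_meas hV ht).2⟩
  have hf : ContDiff ℝ 1 (fderiv ℝ Z) := hZ.fderiv_right (by norm_num)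
  have e1 := ibpx iV iVx (fun t ht => ac_of_lip one_pos (lip_x hV (Ioo_subset_Icc_self ht))) hx
    (φ := fun p => fderiv ℝ Z p (0, 1)) (hf.clm_apply contDiff_const) (hc.fderiv_apply ℝ _)
    ((tsupport_fderiv_apply_subset ℝ _).trans hs)
  have e2 := ibpt hT iV iVt (fun t ht => ac_of_lip hT (lip_t hV (Ioo_subset_Icc_self ht))) ht
    (φ := fun p => fderiv ℝ Z p (1, 0)) (hf.clm_apply contDiff_const) (hc.fderiv_apply ℝ _)
    ((tsupport_fderiv_apply_subset ℝ _).trans hs)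
  rw [← neg_inj, ← e1, ← e2]
  congr 1; ext p
  have hsym : IsSymmSndFDerivAt ℝ Z p := hZ.contDiffAt.isSymmSndFDerivAt (by simp)
  have hdf : DifferentiableAt ℝ (fderiv ℝ Z) p := hf.differentiable one_ne_zero p
  have key : ∀ v w : ℝ × ℝ, fderiv ℝ (fun p => fderiv ℝ Z p v) p w = fderiv ℝ (fderiv ℝ Z) p w v := by
    intro v w
    rw [fderiv_clm_apply hdf (differentiableAt_const v)]
    simp
  rw [key, key, hsym.eq]

/-- Uniqueness up to constants. -/
lemma const_of_grad_zero {T : ℝ} (hT : 0 < T) {V : ℝ × ℝ → ℝ} {K : ℝ≥0}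
    (hV : LipschitzOnWith K V (ClOmegaT T))
    (hx : ∀ᵐ p ∂(volume.restrict (OmegaT T)), HasDerivAt (fun y => V (y, p.2)) 0 p.1)
    (ht : ∀ᵐ p ∂(volume.restrict (OmegaT T)), HasDerivAt (fun y => V (p.1, y)) 0 p.2) :
    ∃ k, ∀ p ∈ OmegaT T, V p = k := by
  have c1 : ∀ {a b : ℝ} {h : ℝ → ℝ}, a < b → LipschitzOnWith K h (Icc a b) →
      (∀ᵐ x ∂(volume.restrict (Ioo a b)), HasDerivAt h 0 x) → 
      ∃ k, ∀ x ∈ Ioo a b, h x = k := by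
    intro a b h hab hh hd
    have h1 : AbsolutelyContinuousOnInterval h a b := by
      apply LipschitzOnWith.absolutelyContinuousOnInterval (K := K)
      rwa [uIcc_of_le hab.le]
    obtain ⟨k, hk⟩ := h1.const_of_ae_hasDerivAt_zero (by
      rw [uIcc_of_le hab.le, ← ae_restrict_iff'₀ measurableSet_Icc.nullMeasurableSet,
        ← restrict_Ioo_eq_restrict_Icc]
      exact hd)
    exact ⟨k, fun x hx => hk x (by rw [uIcc_of_le hab.le]; exact Ioo_subset_Icc_self hx)⟩
  have dens : ∀ {b : ℝ} {P : ℝ → Prop}, 0 < b → (∀ᵐ t ∂(volume.restrict (Ioo 0 b)), P t) →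
      ∀ t0 ∈ Ioo 0 b, t0 ∈ closure {t | P t ∧ t ∈ Ioo 0 b} := by
    intro b P hb hP t0 ht0
    rw [ae_restrict_iff' measurableSet_Ioo] at hP
    have hd : Dense {t | t ∈ Ioo 0 b → P t} := Measure.dense_of_ae hP
    have := hd.open_subset_closure_inter isOpen_Ioo ht0
    refine closure_mono ?_ this
    rintro t ⟨h1, h2⟩; exact ⟨h2 h1, h1⟩
  have hcont : ContinuousOn V (OmegaT T) := hV.continuousOn.mono (omegaT_subset T)
  have X : ∀ t ∈ Ioo 0 T, ∀ x ∈ Ioo (0:ℝ) 1, ∀ x' ∈ Ioo (0:ℝ) 1, V (x, t) = V (x', t) := by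
    intro t ht0 x hx0 x' hx0'
    have hcl := dens hT (ae_tx hx) t ht0
    have hcx : ∀ x ∈ Ioo (0:ℝ) 1, ContinuousWithinAt (fun t => V (x, t))
      {t | (∀ᵐ x ∂(volume.restrict (Ioo (0:ℝ) 1)), HasDerivAt (fun y => V (y, t)) 0 x) ∧ t ∈ Ioo 0 T} t := by
      intro x hx0
      have : ContinuousAt V (x, t) := hcont.continuousAt ((isOpen_omegaT T).mem_nhds ⟨hx0, ht0⟩)
      exact (ContinuousAt.comp (f := fun t => (x, t)) this (by fun_prop)).continuousWithinAt
    have hcc : (nhdsWithin t {t | (∀ᵐ x ∂(volume.restrict (Ioo (0:ℝ) 1)), HasDerivAt (fun y => V (y, t)) 0 x) ∧ t ∈ Ioo 0 T}).NeBot := mem_closure_iff_nhdsWithin_neBot.mp hcl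
    refine tendsto_nhds_unique_of_eventuallyEq (hcx x hx0) (hcx x' hx0') ?_
    filter_upwards [self_mem_nhdsWithin] with s hs
    obtain ⟨k, hk⟩ := c1 one_pos (lip_x hV (Ioo_subset_Icc_self hs.2)) hs.1
    rw [hk x hx0, hk x' hx0']
  obtain ⟨x0, hx0⟩ : ∃ x0 ∈ Ioo (0:ℝ) 1, ∀ᵐ t ∂(volume.restrict (Ioo (0:ℝ) T)),
      HasDerivAt (fun y => V (x0, y)) 0 t := by
    have h := ae_xt ht
    have := dens one_pos h (1/2) (by norm_num)
    obtain ⟨x, hx⟩ := (closure_nonempty_iff.mp ⟨_, this⟩)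
    exact ⟨x, hx.2, hx.1⟩
  obtain ⟨k, hk⟩ := c1 hT (lip_t hV (Ioo_subset_Icc_self hx0.1)) hx0.2
  refine ⟨k, ?_⟩
  rintro ⟨x, t⟩ ⟨h1, h2⟩
  rw [X t h2 x h1 x0 hx0.1, hk t h2]

lemma ae_zero_of_rect {μ ν : Measure ℝ} [IsFiniteMeasure μ] [IsFiniteMeasure ν] {H : ℝ × ℝ → ℝ}
    (hH : Integrable H (μ.prod ν))
    (h : ∀ A B : Set ℝ, MeasurableSet A → MeasurableSet B → ∫ p in A ×ˢ B, H p ∂(μ.prod ν) = 0) :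
    H =ᵐ[μ.prod ν] 0 := by
  apply hH.ae_eq_zero_of_forall_setIntegral_eq_zero
  intro s hs _
  induction s, hs using MeasurableSpace.induction_on_inter generateFrom_prod.symm isPiSystem_prod with
  | empty => simp
  | basic t ht =>
    obtain ⟨A, hA, B, hB, rfl⟩ := ht
    exact h A B hA hB
  | compl t htm ih =>
    have h1 := integral_add_compl htm hH
    have h2 := h univ univ MeasurableSet.univ MeasurableSet.univ
    rw [univ_prod_univ, setIntegral_univ] at h2
    have := ih (measure_lt_top _ _)
    linarith
  | iUnion f hd hm ih =>
    rw [integral_iUnion hm hd hH.integrableOn]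
    simp [fun i => ih i (measure_lt_top _ _)]

lemma dbr1 {h : ℝ → ℝ} (hh : IntegrableOn h (Ioo 0 1))
    (h0 : ∀ φ : ℝ → ℝ, ContDiff ℝ (⊤ : ℕ∞) φ → HasCompactSupport φ → tsupport φ ⊆ Ioo (0:ℝ) 1 →
      ∫ x in Ioo (0:ℝ) 1, h x * deriv φ x = 0) :
    ∃ k, ∀ᵐ x ∂(volume.restrict (Ioo (0:ℝ) 1)), h x = k := by
  let ρb : ContDiffBump (1/2 : ℝ) := ⟨1/8, 1/4, by norm_num, by norm_num⟩
  let ρ : ℝ → ℝ := ρb.normed volume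
  have hρs : ContDiff ℝ (⊤ : ℕ∞) ρ := ρb.contDiff_normed
  have hρc : HasCompactSupport ρ := ρb.hasCompactSupport_normed
  have hρt : tsupport ρ ⊆ Ioo (0:ℝ) 1 := by
    have : tsupport ρ = Metric.closedBall (1/2:ℝ) (1/4) := ρb.tsupport_normed_eq
    rw [this, Real.closedBall_eq_Icc]
    intro x hx
    constructor <;> linarith [hx.1, hx.2]
  have hρ1 : ∫ x, ρ x = 1 := ρb.integral_normed
  have mulint : ∀ η : ℝ → ℝ, Continuous η → HasCompactSupport η →
      IntegrableOn (fun x => h x * η x) (Ioo 0 1) := by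
    intro η hη hc
    obtain ⟨C, hC⟩ := hη.bounded_above_of_compact_support hc
    exact Integrable.mul_bdd (c := C) hh hη.aestronglyMeasurable (ae_of_all _ hC)
  set k := ∫ x in Ioo (0:ℝ) 1, h x * ρ x with hk
  refine ⟨k, ?_⟩
  have key : ∀ᵐ x, x ∈ Ioo (0:ℝ) 1 → h x - k = 0 := by
    apply isOpen_Ioo.ae_eq_zero_of_integral_contDiff_smul_eq_zero
    · exact (hh.sub (integrableOn_const (by simp) (by simp))).locallyIntegrableOn
    intro η hη hηc hηt
    let θ : ℝ → ℝ := fun x => η x - (∫ y, η y) * ρ x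
    let φ : ℝ → ℝ := fun x => ∫ y in (0:ℝ)..x, θ y
    have hθs : ContDiff ℝ (⊤ : ℕ∞) θ := hη.sub (contDiff_const.mul hρs)
    have iη : Integrable η := hη.continuous.integrable_of_hasCompactSupport hηc
    have iρ : Integrable ρ := hρs.continuous.integrable_of_hasCompactSupport hρc
    have hθ0 : ∫ x, θ x = 0 := by
      simp only [θ]
      rw [integral_sub iη (iρ.const_mul _), integral_const_mul, hρ1]; ring
    have hφd : ∀ x, HasDerivAt φ (θ x) x := fun x =>
      intervalIntegral.integral_hasDerivAt_right (hθs.continuous.intervalIntegrable _ _)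
        (hθs.continuous.stronglyMeasurableAtFilter _ _) hθs.continuous.continuousAt
    have hφd' : deriv φ = θ := funext fun x => (hφd x).deriv
    have hφs : ContDiff ℝ (⊤ : ℕ∞) φ := by
      rw [contDiff_infty_iff_deriv]
      exact ⟨fun x => (hφd x).differentiableAt, by rw [hφd']; exact hθs⟩
    obtain ⟨a, b, ha, hb, hab, hsub⟩ : ∃ a b : ℝ, 0 < a ∧ b < 1 ∧ a ≤ b ∧ tsupport η ∪ tsupport ρ ⊆ Icc a b := by
      have hK : IsCompact (tsupport η ∪ tsupport ρ) := IsCompact.union hηc hρc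
      have hne : (tsupport η ∪ tsupport ρ).Nonempty := by
        refine Nonempty.inr ?_
        have : tsupport ρ = Metric.closedBall (1/2:ℝ) (1/4) := ρb.tsupport_normed_eq
        rw [this]; exact ⟨1/2, by simp⟩
      obtain ⟨a, ha⟩ := hK.exists_isLeast hne
      obtain ⟨b, hb⟩ := hK.exists_isGreatest hne
      have hKs := union_subset hηt hρt
      exact ⟨a, b, (hKs ha.1).1, (hKs hb.1).2, ha.2 hb.1, fun x hx => ⟨ha.2 hx, hb.2 hx⟩⟩
    have hθz : ∀ x, x ∉ Icc a b → θ x = 0 := by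
      intro x hx
      have h1 : η x = 0 := image_eq_zero_of_notMem_tsupport fun h => hx (hsub (Or.inl h))
      have h2 : ρ x = 0 := image_eq_zero_of_notMem_tsupport fun h => hx (hsub (Or.inr h))
      simp [θ, h1, h2]
    have iθ : Integrable θ := iη.sub (iρ.const_mul _)
    have hφz : ∀ x, x ∉ Icc a b → φ x = 0 := by
      intro x hx
      rw [mem_Icc, not_and_or, not_le, not_le] at hx
      rcases hx with hx | hx
      · simp only [φ]
        rw [intervalIntegral.integral_congr (g := fun _ => 0)]
        · simp
        · intro y hy
          apply hθz
          intro hy2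
          rcases mem_uIcc.mp hy with h | h <;> linarith [hy2.1, h.2]
      · simp only [φ]
        rw [intervalIntegral.integral_of_le (by linarith), ← hθ0]
        apply setIntegral_eq_integral_of_forall_compl_eq_zero
        intro y hy
        apply hθz
        intro hy2
        exact hy ⟨by linarith [hy2.1], by linarith [hy2.2]⟩
    have hφt : tsupport φ ⊆ Icc a b := by
      apply closure_minimal _ isClosed_Icc
      intro x hx
      by_contra hn
      exact hx (hφz x hn)
    have hz := h0 φ hφs (HasCompactSupport.intro isCompact_Icc hφz)
      (hφt.trans fun x hx => ⟨by linarith [hx.1], by linarith [hx.2]⟩)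
    rw [hφd'] at hz
    simp only [θ, smul_eq_mul] at hz ⊢
    have e1 : ∀ x, h x * (η x - (∫ y, η y) * ρ x) = h x * η x - (∫ y, η y) * (h x * ρ x) := by intro x; ring
    simp_rw [e1] at hz
    rw [integral_sub (mulint η hη.continuous hηc) ((mulint ρ hρs.continuous hρc).const_mul _),
      integral_const_mul, ← hk] at hz
    have e2 : ∫ x, η x * (h x - k) = ∫ x in Ioo (0:ℝ) 1, η x * (h x - k) := by
      symm
      apply setIntegral_eq_integral_of_forall_compl_eq_zero
      intro y hy
      rw [image_eq_zero_of_notMem_tsupport fun h => hy (hηt h), zero_mul]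
    have e3 : ∫ x in Ioo (0:ℝ) 1, η x = ∫ x, η x := by
      apply setIntegral_eq_integral_of_forall_compl_eq_zero
      intro y hy
      rw [image_eq_zero_of_notMem_tsupport fun h => hy (hηt h)]
    rw [e2]
    have e4 : ∀ x, η x * (h x - k) = h x * η x - k * η x := by intro x; ring
    simp_rw [e4]
    rw [integral_sub (mulint η hη.continuous hηc) (iη.integrableOn.const_mul _), integral_const_mul, e3]
    linarith
  rw [ae_restrict_iff' measurableSet_Ioo]
  filter_upwards [key] with x hx hm
  linarith [hx hm]

instance prob01 : IsProbabilityMeasure (volume.restrict (Ioo (0:ℝ) 1)) := ⟨by simp⟩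

lemma dbr2 {T : ℝ} {D : ℝ × ℝ → ℝ} (hD : IntegrableOn D (OmegaT T))
    (h0 : ∀ Z : ℝ × ℝ → ℝ, ContDiff ℝ (⊤ : ℕ∞) Z → HasCompactSupport Z → tsupport Z ⊆ OmegaT T →
      ∫ p in OmegaT T, D p * fderiv ℝ Z p (1, 0) = 0) :
    ∀ᵐ p ∂(volume.restrict (OmegaT T)), D p = ∫ x in Ioo (0:ℝ) 1, D (x, p.2) := by
  unfold IntegrableOn at hD
  rw [omegaT_restrict] at hD ⊢
  rw [omegaT_restrict] at h0
  set μ : Measure ℝ := volume.restrict (Ioo (0:ℝ) 1) with hμ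
  set ν : Measure ℝ := volume.restrict (Ioo (0:ℝ) T) with hν
  have s1 : ∀ φ : ℝ → ℝ, ContDiff ℝ (⊤ : ℕ∞) φ → HasCompactSupport φ → tsupport φ ⊆ Ioo (0:ℝ) 1 →
      Integrable (fun p : ℝ × ℝ => D p * deriv φ p.1) (μ.prod ν) ∧
      ∀ᵐ t ∂ν, ∫ x, D (x, t) * deriv φ x ∂μ = 0 := by
    intro φ hφ hφc hφt
    have hφ' : Continuous (deriv φ) := hφ.continuous_deriv (by simp)
    have i1 : Integrable (fun p : ℝ × ℝ => D p * deriv φ p.1) (μ.prod ν) := by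
      obtain ⟨C, hC⟩ := hφ'.bounded_above_of_compact_support hφc.deriv
      exact hD.mul_bdd (c := C) (hφ'.comp continuous_fst).aestronglyMeasurable
        (ae_of_all _ fun p => hC p.1)
    refine ⟨i1, ?_⟩
    rw [hν, ae_restrict_iff' measurableSet_Ioo]
    apply isOpen_Ioo.ae_eq_zero_of_integral_contDiff_smul_eq_zero
    · have : IntegrableOn (fun t => ∫ x, D (x, t) * deriv φ x ∂μ) (Ioo 0 T) := i1.integral_prod_right
      exact this.locallyIntegrableOn
    intro ψ hψ hψc hψt
    have hZt : ∀ p : ℝ × ℝ, p ∉ tsupport φ ×ˢ tsupport ψ → φ p.1 * ψ p.2 = 0 := by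
      intro p hp
      rw [mem_prod, not_and_or] at hp
      rcases hp with hp | hp
      · rw [image_eq_zero_of_notMem_tsupport hp, zero_mul]
      · rw [image_eq_zero_of_notMem_tsupport hp, mul_zero]
    have hcl : IsCompact (tsupport φ ×ˢ tsupport ψ) := IsCompact.prod hφc hψc
    have hZ := h0 (fun p => φ p.1 * ψ p.2) ((hφ.comp contDiff_fst).mul (hψ.comp contDiff_snd))
      (HasCompactSupport.intro hcl hZt) (by
        refine (closure_minimal ?_ hcl.isClosed).trans (prod_mono hφt hψt)
        intro p hp
        by_contra hn
        exact hp (hZt p hn))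
    have hdz : ∀ p : ℝ × ℝ, fderiv ℝ (fun p : ℝ × ℝ => φ p.1 * ψ p.2) p (1, 0) = deriv φ p.1 * ψ p.2 := by
      rintro ⟨x, t⟩
      have hdd : Differentiable ℝ (fun p : ℝ × ℝ => φ p.1 * ψ p.2) :=
        ((hφ.comp contDiff_fst).mul (hψ.comp contDiff_snd)).differentiable (by simp)
      refine (zx_eq hdd x t).unique ?_
      exact ((hφ.differentiable (by simp) x).hasDerivAt).mul_const (ψ t)
    simp_rw [hdz, ← mul_assoc] at hZ
    have i2 : Integrable (fun p : ℝ × ℝ => D p * deriv φ p.1 * ψ p.2) (μ.prod ν) := by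
      obtain ⟨C, hC⟩ := hψ.continuous.bounded_above_of_compact_support hψc
      exact i1.mul_bdd (c := C) (hψ.continuous.comp continuous_snd).aestronglyMeasurable
        (ae_of_all _ fun p => hC p.2)
    rw [integral_prod_symm _ i2] at hZ
    simp only [integral_mul_const] at hZ
    rw [← hZ, hν]
    symm
    rw [setIntegral_eq_integral_of_forall_compl_eq_zero]
    · congr 1; ext t; rw [smul_eq_mul, mul_comm]
    · intro t ht
      rw [image_eq_zero_of_notMem_tsupport fun h => ht (hψt h), mul_zero]
  have s2 : ∀ A : Set ℝ, MeasurableSet A → ∃ k, ∀ᵐ x ∂μ, ∫ t in A, D (x, t) ∂ν = k := by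
    intro A hA
    have hDA : Integrable D (μ.prod (ν.restrict A)) := by
      have := hD.restrict (s := univ ×ˢ A)
      rwa [← Measure.prod_restrict, Measure.restrict_univ] at this
    apply dbr1
    · exact hDA.integral_prod_left
    intro φ hφ hφc hφt
    obtain ⟨i1, hz⟩ := s1 φ hφ hφc hφt
    have i2 : Integrable (fun p : ℝ × ℝ => D p * deriv φ p.1) (μ.prod (ν.restrict A)) := by
      have := i1.restrict (s := univ ×ˢ A)
      rwa [← Measure.prod_restrict, Measure.restrict_univ] at this
    simp_rw [← integral_mul_const]
    rw [← hμ, integral_integral_swap i2]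
    rw [integral_congr_ae (g := fun _ => 0) (ae_restrict_of_ae hz)]
    simp
  have iq : Integrable (fun t => ∫ x, D (x, t) ∂μ) ν := hD.integral_prod_right
  have iq2 : Integrable (fun p : ℝ × ℝ => ∫ x, D (x, p.2) ∂μ) (μ.prod ν) := iq.comp_snd μ
  have := ae_zero_of_rect (hD.sub iq2) (by
    intro B A hB hA
    obtain ⟨k, hk⟩ := s2 A hA
    have hDA : Integrable D (μ.prod (ν.restrict A)) := by
      have := hD.restrict (s := univ ×ˢ A)
      rwa [← Measure.prod_restrict, Measure.restrict_univ] at this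
    have hDBA : Integrable D ((μ.restrict B).prod (ν.restrict A)) := by
      have := hD.restrict (s := B ×ˢ A)
      rwa [← Measure.prod_restrict] at this
    have hqBA : Integrable (fun p : ℝ × ℝ => ∫ x, D (x, p.2) ∂μ) ((μ.restrict B).prod (ν.restrict A)) := by
      have := iq2.restrict (s := B ×ˢ A)
      rwa [← Measure.prod_restrict] at this
    have e1 : ∫ t in A, (∫ x, D (x, t) ∂μ) ∂ν = k := by
      rw [← integral_integral_swap (f := fun x t => D (x, t)) hDA, integral_congr_ae hk]
      simp
    rw [← Measure.prod_restrict]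
    simp only [Pi.sub_apply]
    rw [integral_sub hDBA hqBA, integral_prod _ hDBA, integral_prod _ hqBA]
    simp only
    rw [e1, integral_congr_ae (ae_restrict_of_ae hk)]
    simp)
  filter_upwards [this] with p hp
  simp only [Pi.sub_apply, Pi.zero_apply] at hp
  linarith

lemma lip_deriv_t {T : ℝ} {V : ℝ × ℝ → ℝ} {K : ℝ≥0} (hV : LipschitzOnWith K V (ClOmegaT T)) :
    ∀ᵐ p ∂(volume.restrict (OmegaT T)),
      HasDerivAt (fun y => V (p.1, y)) (deriv (fun y => V (p.1, y)) p.2) p.2 := by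
  obtain ⟨U, hU, hE⟩ := hV.extend_real
  have h1 := hU.ae_differentiableAt (μ := volume)
  filter_upwards [ae_restrict_of_ae h1, ae_restrict_mem (measurableSet_omegaT T)] with p hp hm
  have h2 : DifferentiableAt ℝ (fun y => U (p.1, y)) p.2 :=
    DifferentiableAt.comp (f := fun y : ℝ => (p.1, y)) (g := U) p.2 hp (by fun_prop)
  have h3 : DifferentiableAt ℝ (fun y => V (p.1, y)) p.2 := by
    refine h2.congr_of_eventuallyEq ?_
    filter_upwards [isOpen_Ioo.mem_nhds hm.2] with y hy
    exact hE (omegaT_subset T ⟨hm.1, hy⟩)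
  exact h3.hasDerivAt

lemma lipOn_of_bound {s : Set (ℝ × ℝ)} {V : ℝ × ℝ → ℝ} {A B : ℝ} (hA : 0 ≤ A) (hB : 0 ≤ B)
    (h : ∀ p ∈ s, ∀ q ∈ s, |V p - V q| ≤ A * |p.1 - q.1| + B * |p.2 - q.2|) :
    LipschitzOnWith (Real.toNNReal (A + B)) V s := by
  apply LipschitzOnWith.of_dist_le_mul
  intro p hp q hq
  rw [Real.coe_toNNReal _ (by positivity), Real.dist_eq]
  have h1 : |p.1 - q.1| ≤ dist p q := le_max_left (dist p.1 q.1) (dist p.2 q.2)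
  have h2 : |p.2 - q.2| ≤ dist p q := le_max_right (dist p.1 q.1) (dist p.2 q.2)
  calc _ ≤ _ := h p hp q hq
    _ ≤ A * dist p q + B * dist p q := by gcongr
    _ = _ := by ring

lemma exists_primitive {T : ℝ} {u : ℝ × ℝ → ℝ} {K : ℝ≥0} (hu : LipschitzOnWith K u (ClOmegaT T)) :
    ∃ (V : ℝ × ℝ → ℝ) (L : ℝ≥0), LipschitzOnWith L V (ClOmegaT T) ∧
      ∀ p ∈ OmegaT T, HasDerivAt (fun y => V (y, p.2)) (u p) p.1 := by
  obtain ⟨U, hU, hE⟩ := hu.extend_real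
  obtain ⟨M, hM⟩ := (isCompact_clOmegaT T).exists_bound_of_continuousOn hU.continuous.continuousOn
  have hc : ∀ t, Continuous (fun y => U (y, t)) := fun t => hU.continuous.comp (by fun_prop)
  refine ⟨fun p => ∫ y in (0:ℝ)..p.1, U (y, p.2), _, lipOn_of_bound (A := max M 0) (B := K) (le_max_right _ _) K.2 ?_, ?_⟩
  · rintro ⟨x, t⟩ ⟨hx, ht⟩ ⟨x', t'⟩ ⟨hx', ht'⟩
    simp only at *
    have e1 : (∫ y in (0:ℝ)..x, U (y, t)) - ∫ y in (0:ℝ)..x', U (y, t') =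
        (∫ y in x'..x, U (y, t)) + ∫ y in (0:ℝ)..x', (U (y, t) - U (y, t')) := by
      rw [intervalIntegral.integral_sub ((hc t).intervalIntegrable _ _) ((hc t').intervalIntegrable _ _),
        ← intervalIntegral.integral_add_adjacent_intervals ((hc t).intervalIntegrable 0 x') ((hc t).intervalIntegrable x' x)]
      ring
    have e2 : |∫ y in x'..x, U (y, t)| ≤ max M 0 * |x - x'| := by
      rw [← Real.norm_eq_abs]
      apply intervalIntegral.norm_integral_le_of_norm_le_const
      intro y hy
      refine (hM (y, t) ⟨?_, ht⟩).trans (le_max_left _ _)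
      rcases le_total x' x with h | h
      · rw [uIoc_of_le h] at hy; exact ⟨by linarith [hx'.1, hy.1], by linarith [hx.2, hy.2]⟩
      · rw [uIoc_of_ge h] at hy; exact ⟨by linarith [hx.1, hy.1], by linarith [hx'.2, hy.2]⟩
    have e3 : |∫ y in (0:ℝ)..x', (U (y, t) - U (y, t'))| ≤ (K * |t - t'|) * |x' - 0| := by
      rw [← Real.norm_eq_abs]
      apply intervalIntegral.norm_integral_le_of_norm_le_const
      intro y hy
      have := hU.dist_le_mul (y, t) (y, t')
      rw [Prod.dist_eq] at this
      simpa [Real.dist_eq] using this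
    have e4 : (K * |t - t'|) * |x' - 0| ≤ K * |t - t'| := by
      apply mul_le_of_le_one_right (by positivity)
      rw [sub_zero, abs_of_nonneg hx'.1]; exact hx'.2
    rw [e1]
    exact (abs_add_le _ _).trans (by linarith)
  · rintro ⟨x, t⟩ hp
    rw [hE (omegaT_subset T hp)]
    exact intervalIntegral.integral_hasDerivAt_right ((hc t).intervalIntegrable _ _)
        ((hc t).stronglyMeasurableAtFilter _ _) (hc t).continuousAt

lemma exists_stream {T : ℝ} (hT : 0 < T) {u g : ℝ × ℝ → ℝ} {K : ℝ≥0}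
    (hu : LipschitzOnWith K u (ClOmegaT T)) (hg : IntegrableOn g (OmegaT T))
    (hgb : ∃ M, ∀ᵐ p ∂(volume.restrict (OmegaT T)), |g p| ≤ M)
    (h0 : ∀ Z : ℝ × ℝ → ℝ, ContDiff ℝ (⊤ : ℕ∞) Z → HasCompactSupport Z → tsupport Z ⊆ OmegaT T →
      ∫ p in OmegaT T, u p * fderiv ℝ Z p (0, 1) = ∫ p in OmegaT T, g p * fderiv ℝ Z p (1, 0)) :
    ∃ (v : ℝ × ℝ → ℝ) (L : ℝ≥0), LipschitzOnWith L v (ClOmegaT T) ∧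
      (∀ᵐ p ∂(volume.restrict (OmegaT T)), HasDerivAt (fun y => v (y, p.2)) (u p) p.1) ∧
      (∀ᵐ p ∂(volume.restrict (OmegaT T)), HasDerivAt (fun τ => v (p.1, τ)) (g p) p.2) := by
  obtain ⟨V, L, hV, hVx⟩ := exists_primitive hu
  have hVx' : ∀ᵐ p ∂(volume.restrict (OmegaT T)), HasDerivAt (fun y => V (y, p.2)) (u p) p.1 := by
    filter_upwards [ae_restrict_mem (measurableSet_omegaT T)] with p hp using hVx p hp
  have hVt := lip_deriv_t hV
  set Vt : ℝ × ℝ → ℝ := fun p => deriv (fun y => V (p.1, y)) p.2 with hVtd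
  obtain ⟨hVtm, hVtb⟩ := derivt_meas hV hVt
  have iVt : IntegrableOn Vt (OmegaT T) := bdd_integrable hVtm ⟨_, hVtb⟩
  obtain ⟨M, hM⟩ := hgb
  let D : ℝ × ℝ → ℝ := fun p => g p - Vt p
  have iD : IntegrableOn D (OmegaT T) := hg.sub iVt
  have hD := dbr2 iD (by
    intro Z hZ hZc hZt
    have c0 : Continuous (fun p => fderiv ℝ Z p (1, 0)) :=
      (hZ.continuous_fderiv (by simp)).clm_apply continuous_const
    have c1 : HasCompactSupport (fun p => fderiv ℝ Z p (1, 0)) := hZc.fderiv_apply ℝ _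
    simp only [D, sub_mul]
    rw [integral_sub (integrable_mul_test hg c0 c1) (integrable_mul_test iVt c0 c1),
      ← h0 Z hZ hZc hZt, ← curl_free hT hV hVx' hVt ((contDiff_infty.mp hZ) 2) hZc hZt, sub_self])
  set q : ℝ → ℝ := fun t => ∫ x in Ioo (0:ℝ) 1, D (x, t) with hq
  have iq : IntegrableOn q (Ioo 0 T) := by
    unfold IntegrableOn at iD
    rw [omegaT_restrict] at iD
    exact iD.integral_prod_right
  have iq' : IntervalIntegrable q volume 0 T := by
    rw [intervalIntegrable_iff_integrableOn_Ioo_of_le hT.le]; exact iq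
  obtain ⟨N, hN0, hN⟩ : ∃ N : ℝ, 0 ≤ N ∧ ∀ᵐ t ∂(volume.restrict (Ioo 0 T)), |q t| ≤ N := by
    refine ⟨max (M + L) 0, le_max_right _ _, ?_⟩
    have : ∀ᵐ p ∂(volume.restrict (OmegaT T)), |D p| ≤ M + L := by
      filter_upwards [hM, hVtb] with p h1 h2
      exact (abs_sub _ _).trans (add_le_add h1 h2)
    filter_upwards [ae_tx this] with t ht
    have := norm_integral_le_of_norm_le_const (μ := volume.restrict (Ioo (0:ℝ) 1))
      (f := fun x => D (x, t)) (C := M + L) ht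
    simp at this
    exact this.trans (le_max_left _ _)
  let h : ℝ → ℝ := fun t => ∫ s in (0:ℝ)..t, q s
  have hsubI : ∀ t ∈ Icc 0 T, ∀ t' ∈ Icc 0 T, IntervalIntegrable q volume t t' := by
    intro t ht t' ht'
    apply iq'.mono_set
    rw [uIcc_of_le hT.le]
    exact uIcc_subset_Icc ht ht'
  have hh : ∀ t ∈ Icc 0 T, ∀ t' ∈ Icc 0 T, |h t - h t'| ≤ N * |t - t'| := by
    intro t ht t' ht'
    have h00 : (0:ℝ) ∈ Icc 0 T := ⟨le_rfl, hT.le⟩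
    simp only [h]
    rw [intervalIntegral.integral_interval_sub_left (hsubI 0 h00 t ht) (hsubI 0 h00 t' ht')]
    rw [← Real.norm_eq_abs]
    apply intervalIntegral.norm_integral_le_of_norm_le_const_ae
    rw [restrict_Ioo_eq_restrict_Icc, ae_restrict_iff' measurableSet_Icc] at hN
    filter_upwards [hN] with s hs hs2
    exact hs (uIcc_subset_Icc ht' ht (uIoc_subset_uIcc hs2))
  have hhd : ∀ᵐ t ∂(volume.restrict (Ioo 0 T)), HasDerivAt h (q t) t := by
    rw [ae_restrict_iff' measurableSet_Ioo]
    filter_upwards [iq'.ae_hasDerivAt_integral] with t ht htm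
    have h1 : t ∈ uIcc 0 T := by rw [uIcc_of_le hT.le]; exact Ioo_subset_Icc_self htm
    exact ht h1 0 (by simp)
  have hhd2 : ∀ᵐ p ∂(volume.restrict (OmegaT T)), HasDerivAt h (q p.2) p.2 := by
    rw [omegaT_restrict]
    exact Measure.quasiMeasurePreserving_snd.ae hhd
  refine ⟨fun p => V p + h p.2, _, lipOn_of_bound (A := L) (B := L + N) L.2 (add_nonneg L.2 hN0) ?_, ?_, ?_⟩
  · intro p hp p' hp'
    have a1 := hV.dist_le_mul p hp p' hp'
    rw [Real.dist_eq] at a1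
    have a2 := hh p.2 hp.2 p'.2 hp'.2
    have a3 : dist p p' ≤ |p.1 - p'.1| + |p.2 - p'.2| := by
      rw [Prod.dist_eq, Real.dist_eq, Real.dist_eq]
      exact max_le_add_of_nonneg (abs_nonneg _) (abs_nonneg _)
    have a4 := mul_le_mul_of_nonneg_left a3 L.2
    have : V p + h p.2 - (V p' + h p'.2) = (V p - V p') + (h p.2 - h p'.2) := by ring
    rw [this]
    refine (abs_add_le _ _).trans ?_
    change _ ≤ (L:ℝ) * (|p.1 - p'.1| + |p.2 - p'.2|) at a4
    nlinarith
  · filter_upwards [hVx'] with p hp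
    exact hp.add_const _
  · filter_upwards [hVt, hhd2, hD] with p h1 h2 h3
    have := h1.add h2
    change g p - Vt p = q p.2 at h3
    have e : g p = Vt p + q p.2 := by linarith
    rw [e]
    exact this


lemma ac_congr {f g : ℝ → ℝ} (h : AbsolutelyContinuousOnInterval f 0 1)
    (e : ∀ x ∈ Icc (0:ℝ) 1, g x = f x) : AbsolutelyContinuousOnInterval g 0 1 := by
  rw [absolutelyContinuousOnInterval_iff] at h ⊢
  intro ε hε
  obtain ⟨δ, hδ, H⟩ := h ε hε
  refine ⟨δ, hδ, fun E hE hlt => ?_⟩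
  have h2 := H E hE hlt
  have h3 : ∀ i ∈ Finset.range E.1, dist (g (E.2 i).1) (g (E.2 i).2) = dist (f (E.2 i).1) (f (E.2 i).2) := by
    intro i hi
    have h4 := hE.1 i hi
    rw [uIcc_of_le zero_le_one] at h4
    rw [e _ h4.1, e _ h4.2]
  rwa [Finset.sum_congr rfl h3]



lemma sigma_meas {T s1 s2 : ℝ} (hs12 : s1 < s2) {sigma : ℝ → ℝ}
    (hl : ContinuousOn sigma (Iic s1)) (hr : ContinuousOn sigma (Ici s2)) {w : ℝ × ℝ → ℝ}
    (hw : AEStronglyMeasurable w (volume.restrict (OmegaT T)))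
    (hrange : ∀ᵐ p ∂(volume.restrict (OmegaT T)), w p ≤ s1 ∨ s2 ≤ w p) :
    AEStronglyMeasurable (fun p => sigma (w p)) (volume.restrict (OmegaT T)) := by
  classical
  have hm : Measurable (fun s => (Iic s1).indicator sigma s + (Ici s2).indicator sigma s) := by
    apply Measurable.add
    · rw [← piecewise_eq_indicator]
      exact hl.measurable_piecewise continuousOn_const measurableSet_Iic
    · rw [← piecewise_eq_indicator]
      exact hr.measurable_piecewise continuousOn_const measurableSet_Ici
  refine (hm.comp_aemeasurable hw.aemeasurable).aestronglyMeasurable.congr ?_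
  filter_upwards [hrange] with p hp
  rcases hp with hp | hp
  · have : ¬ s2 ≤ w p := by linarith
    simp [indicator, hp, this]
  · have : ¬ w p ≤ s1 := by linarith
    simp [indicator, hp, this]

lemma pot_facts {T : ℝ} (hT : 0 < T) {b bx c f u ux : ℝ → ℝ → ℝ}
    (hb : ContinuousOn (fun p : ℝ × ℝ => b p.1 p.2) (ClOmegaT T))
    (hbx : ∀ p ∈ ClOmegaT T,
      HasDerivWithinAt (fun y => b y p.2) (bx p.1 p.2) (Icc (0:ℝ) 1) p.1)
    (hbx_cont : ContinuousOn (fun p : ℝ × ℝ => bx p.1 p.2) (ClOmegaT T))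
    (hc : ContinuousOn (fun p : ℝ × ℝ => c p.1 p.2) (ClOmegaT T))
    (hf : ContinuousOn (fun p : ℝ × ℝ => f p.1 p.2) (ClOmegaT T))
    {K : ℝ≥0} (hu : LipschitzOnWith K (fun p : ℝ × ℝ => u p.1 p.2) (ClOmegaT T))
    (hux : ∀ᵐ p ∂(volume.restrict (OmegaT T)), HasDerivAt (fun y => u y p.2) (ux p.1 p.2) p.1) :
    ContinuousOn (fun p : ℝ × ℝ => b p.1 p.2 * u p.1 p.2 + Pot c bx u p.1 p.2 + Fint f p.1 p.2) (ClOmegaT T) ∧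
    (∀ t ∈ Ioo (0:ℝ) T, AbsolutelyContinuousOnInterval
      (fun x => b x t * u x t + Pot c bx u x t + Fint f x t) 0 1) ∧
    (∀ᵐ p ∂(volume.restrict (OmegaT T)),
      HasDerivAt (fun x => b x p.2 * u x p.2 + Pot c bx u x p.2 + Fint f x p.2)
        (b p.1 p.2 * ux p.1 p.2 + c p.1 p.2 * u p.1 p.2 + f p.1 p.2) p.1) := by
  have huc := hu.continuousOn
  let k : ℝ × ℝ → ℝ := fun p => (c p.1 p.2 - bx p.1 p.2) * u p.1 p.2 + f p.1 p.2
  have hk : ContinuousOn k (ClOmegaT T) := ((hc.sub hbx_cont).mul huc).add hf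
  let kk : ℝ × ℝ → ℝ := fun p => k (projIcc 0 1 zero_le_one p.1, projIcc 0 T hT.le p.2)
  have hkk : Continuous kk := by
    apply hk.comp_continuous (f := fun p : ℝ × ℝ => ((projIcc 0 1 zero_le_one p.1 : ℝ), (projIcc 0 T hT.le p.2 : ℝ)))
    · exact (continuous_subtype_val.comp (continuous_projIcc.comp continuous_fst)).prodMk
        (continuous_subtype_val.comp (continuous_projIcc.comp continuous_snd))
    · intro p
      exact ⟨Subtype.coe_prop _, Subtype.coe_prop _⟩
  have hkke : ∀ p ∈ ClOmegaT T, kk p = k p := by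
    rintro ⟨x, t⟩ ⟨hx, ht⟩
    simp only [kk]
    rw [projIcc_of_mem _ hx, projIcc_of_mem _ ht]
  let G : ℝ × ℝ → ℝ := fun p => ∫ y in (0:ℝ)..p.1, kk (y, p.2)
  have hG : Continuous G := by
    apply intervalIntegral.continuous_parametric_intervalIntegral_of_continuous
      (f := fun (p : ℝ × ℝ) y => kk (y, p.2)) _ continuous_fst
    exact hkk.comp (by fun_prop)
  have slice : ∀ {h : ℝ × ℝ → ℝ}, ContinuousOn h (ClOmegaT T) → ∀ t ∈ Icc 0 T,
      ContinuousOn (fun x => h (x, t)) (Icc 0 1) := by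
    intro h hh t ht
    exact hh.comp (f := fun x : ℝ => (x, t)) (by fun_prop) (fun x hx => ⟨hx, ht⟩)
  have hPG : ∀ p ∈ ClOmegaT T, Pot c bx u p.1 p.2 + Fint f p.1 p.2 = G p := by
    rintro ⟨x, t⟩ ⟨hx, ht⟩
    simp only at hx ht
    simp only [Pot, Fint, G]
    have hsub : uIcc 0 x ⊆ Icc (0:ℝ) 1 := by
      rw [uIcc_of_le hx.1]; exact Icc_subset_Icc_right hx.2
    rw [← intervalIntegral.integral_add]
    · apply intervalIntegral.integral_congr
      intro y hy
      exact (hkke (y, t) ⟨hsub hy, ht⟩).symm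
    · exact ((slice ((hc.sub hbx_cont).mul huc) t ht).mono hsub).intervalIntegrable
    · exact ((slice hf t ht).mono hsub).intervalIntegrable
  have hkc : ∀ t, Continuous (fun y => kk (y, t)) := fun t => hkk.comp (by fun_prop)
  refine ⟨?_, ?_, ?_⟩
  · refine ((hb.mul huc).add hG.continuousOn).congr ?_
    intro p hp
    change b p.1 p.2 * u p.1 p.2 + Pot c bx u p.1 p.2 + Fint f p.1 p.2 = b p.1 p.2 * u p.1 p.2 + G p
    rw [← hPG p hp]; ring
  · intro t ht
    have ht' := Ioo_subset_Icc_self ht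
    have a1 : AbsolutelyContinuousOnInterval (fun x => b x t) 0 1 := by
      obtain ⟨M, hM⟩ := isCompact_Icc.exists_bound_of_continuousOn (slice hbx_cont t ht')
      apply ac_of_lip one_pos (C := M.toNNReal)
      apply Convex.lipschitzOnWith_of_nnnorm_hasDerivWithin_le (convex_Icc 0 1)
        (fun x hx => hbx (x, t) ⟨hx, ht'⟩)
      intro x hx
      rw [← NNReal.coe_le_coe, coe_nnnorm]
      exact (hM x hx).trans (Real.le_coe_toNNReal M)
    have a2 : AbsolutelyContinuousOnInterval (fun x => u x t) 0 1 := ac_of_lip one_pos (lip_x hu ht')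
    have a3 : AbsolutelyContinuousOnInterval (fun x => G (x, t)) 0 1 :=
      ((hkc t).intervalIntegrable 0 1).absolutelyContinuousOnInterval_intervalIntegral (by simp)
    have a4 := (a1.fun_mul a2).add a3
    have e : ∀ x ∈ Icc (0:ℝ) 1, b x t * u x t + Pot c bx u x t + Fint f x t = b x t * u x t + G (x, t) := by
      intro x hx
      rw [← hPG (x, t) ⟨hx, ht'⟩]; ring
    exact ac_congr a4 e
  · filter_upwards [hux, ae_restrict_mem (measurableSet_omegaT T)] with p hp hm
    have hm' := omegaT_subset T hm
    have d1 : HasDerivAt (fun y => b y p.2) (bx p.1 p.2) p.1 :=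
      (hbx p hm').hasDerivAt (Icc_mem_nhds hm.1.1 hm.1.2)
    have d2 : HasDerivAt (fun y => G (y, p.2)) (kk p) p.1 :=
      intervalIntegral.integral_hasDerivAt_right ((hkc _).intervalIntegrable _ _)
        ((hkc _).stronglyMeasurableAtFilter _ _) (hkc _).continuousAt
    have d3 := (d1.mul hp).add d2
    rw [hkke p hm'] at d3
    have e : (fun x => b x p.2 * u x p.2 + Pot c bx u x p.2 + Fint f x p.2) =ᶠ[nhds p.1]
        (fun x => b x p.2 * u x p.2 + G (x, p.2)) := by
      filter_upwards [isOpen_Ioo.mem_nhds hm.1] with x hx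
      rw [← hPG (x, p.2) (omegaT_subset T ⟨hx, hm.2⟩)]; ring
    refine (HasDerivAt.congr_of_eventuallyEq ?_ e)
    have e2 : b p.1 p.2 * ux p.1 p.2 + c p.1 p.2 * u p.1 p.2 + f p.1 p.2 =
        bx p.1 p.2 * u p.1 p.2 + b p.1 p.2 * ux p.1 p.2 + k p := by
      simp only [k]; ring
    rw [e2]
    exact d3


/-- A Lipschitz function `u` is a distributional solution of
`u_t = (σ(u_x))_x + b u_x + c u + f` in `Ω_T` iff it admits a Lipschitz stream function `v`
with `v_x = u` and `v_t = σ(u_x) + b u + P_u + F` a.e.; moreover `v` is unique up to an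
additive constant. -/
theorem distributional_iff_stream_function
    (T s1 s2 : ℝ) (hT : 0 < T) (hs1 : 0 < s1) (hs12 : s1 < s2)
    (sigma : ℝ → ℝ)
    (hsigma_l : ContinuousOn sigma (Iic s1)) (hsigma_r : ContinuousOn sigma (Ici s2))
    (hsigma_bdd : ∀ R : ℝ, 0 < R → ∃ M : ℝ, ∀ s : ℝ, |s| ≤ R → |sigma s| ≤ M)
    (b bx c f : ℝ → ℝ → ℝ)
    (hb : ContinuousOn (fun p : ℝ × ℝ => b p.1 p.2) (ClOmegaT T))
    (hbx : ∀ p ∈ ClOmegaT T,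
      HasDerivWithinAt (fun y => b y p.2) (bx p.1 p.2) (Icc (0:ℝ) 1) p.1)
    (hbx_cont : ContinuousOn (fun p : ℝ × ℝ => bx p.1 p.2) (ClOmegaT T))
    (hc : ContinuousOn (fun p : ℝ × ℝ => c p.1 p.2) (ClOmegaT T))
    (hf : ContinuousOn (fun p : ℝ × ℝ => f p.1 p.2) (ClOmegaT T))
    (u ux ut : ℝ → ℝ → ℝ)
    (hlip : ∃ K : ℝ≥0, LipschitzOnWith K (fun p : ℝ × ℝ => u p.1 p.2) (ClOmegaT T))
    (hux : ∀ᵐ p ∂(volume.restrict (OmegaT T)), HasDerivAt (fun y => u y p.2) (ux p.1 p.2) p.1)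
    (hut : ∀ᵐ p ∂(volume.restrict (OmegaT T)), HasDerivAt (fun τ => u p.1 τ) (ut p.1 p.2) p.2)
    (hrange : ∀ᵐ p ∂(volume.restrict (OmegaT T)), ux p.1 p.2 ≤ s1 ∨ s2 ≤ ux p.1 p.2) :
    ((∀ ζ : ℝ → ℝ → ℝ,
        ContDiff ℝ (⊤ : ℕ∞) (fun p : ℝ × ℝ => ζ p.1 p.2) →
        HasCompactSupport (fun p : ℝ × ℝ => ζ p.1 p.2) →
        tsupport (fun p : ℝ × ℝ => ζ p.1 p.2) ⊆ OmegaT T →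
        (∫ p in OmegaT T,
          (u p.1 p.2 * deriv (fun τ => ζ p.1 τ) p.2
            - sigma (ux p.1 p.2) * deriv (fun y => ζ y p.2) p.1
            + (b p.1 p.2 * ux p.1 p.2 + c p.1 p.2 * u p.1 p.2 + f p.1 p.2) * ζ p.1 p.2)) = 0)
      ↔ ∃ v : ℝ → ℝ → ℝ, IsStreamFunction T sigma b bx c f u ux v) ∧
    (∀ v w : ℝ → ℝ → ℝ, IsStreamFunction T sigma b bx c f u ux v →
      IsStreamFunction T sigma b bx c f u ux w →
      ∃ k : ℝ, ∀ p ∈ OmegaT T, v p.1 p.2 = w p.1 p.2 + k) := by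
  obtain ⟨K, hu⟩ := hlip
  obtain ⟨um, ub⟩ := derivx_meas (V1 := fun p => ux p.1 p.2) hu hux
  obtain ⟨Rc, Rac, Rd⟩ := pot_facts hT hb hbx hbx_cont hc hf hu hux
  have Sm := sigma_meas (w := fun p => ux p.1 p.2) hs12 hsigma_l hsigma_r um hrange
  have iu := cont_integrable hu.continuousOn
  have iS : ∃ M, ∀ᵐ p ∂(volume.restrict (OmegaT T)), |sigma (ux p.1 p.2)| ≤ M := by
    obtain ⟨M, hM⟩ := hsigma_bdd (K + 1) (by positivity)
    refine ⟨M, ?_⟩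
    filter_upwards [ub] with p hp
    exact hM _ (hp.trans (by linarith))
  have hSi := bdd_integrable Sm iS
  have iR := cont_integrable Rc
  let g : ℝ × ℝ → ℝ := fun p => sigma (ux p.1 p.2) + b p.1 p.2 * u p.1 p.2
        + Pot c bx u p.1 p.2 + Fint f p.1 p.2
  let R : ℝ × ℝ → ℝ := fun p => b p.1 p.2 * u p.1 p.2 + Pot c bx u p.1 p.2 + Fint f p.1 p.2
  have hgR : ∀ p, g p = sigma (ux p.1 p.2) + R p := fun p => by simp only [g, R]; ring
  have ig : IntegrableOn g (OmegaT T) := by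
    have : g = fun p => sigma (ux p.1 p.2) + R p := funext hgR
    rw [this]
    exact Integrable.add hSi iR
  have gb : ∃ M, ∀ᵐ p ∂(volume.restrict (OmegaT T)), |g p| ≤ M := by
    obtain ⟨M1, h1⟩ := iS
    obtain ⟨M2, h2⟩ := cont_bdd Rc
    refine ⟨M1 + M2, ?_⟩
    filter_upwards [h1, h2] with p h1 h2
    rw [hgR]
    exact (abs_add_le _ _).trans (add_le_add h1 h2)
  have iQ : IntegrableOn (fun p : ℝ × ℝ => b p.1 p.2 * ux p.1 p.2 + c p.1 p.2 * u p.1 p.2 + f p.1 p.2)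
      (OmegaT T) := by
    have j1 : IntegrableOn (fun p : ℝ × ℝ => b p.1 p.2 * ux p.1 p.2) (OmegaT T) :=
      Integrable.mul_bdd (c := K) (cont_integrable hb) um ub
    have j2 := cont_integrable (hc.mul hu.continuousOn)
    exact (Integrable.add j1 j2).add (cont_integrable hf)
  have key : ∀ Z : ℝ × ℝ → ℝ, ContDiff ℝ (⊤ : ℕ∞) Z → HasCompactSupport Z → tsupport Z ⊆ OmegaT T →
      (∫ p in OmegaT T,
          (u p.1 p.2 * deriv (fun τ => Z (p.1, τ)) p.2
            - sigma (ux p.1 p.2) * deriv (fun y => Z (y, p.2)) p.1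
            + (b p.1 p.2 * ux p.1 p.2 + c p.1 p.2 * u p.1 p.2 + f p.1 p.2) * Z (p.1, p.2))) =
      (∫ p in OmegaT T, u p.1 p.2 * fderiv ℝ Z p (0, 1)) - ∫ p in OmegaT T, g p * fderiv ℝ Z p (1, 0) := by
    intro Z hZ hZc hZs
    have hZ1 : ContDiff ℝ 1 Z := (contDiff_infty.mp hZ) 1
    have hZd : Differentiable ℝ Z := hZ1.differentiable one_ne_zero
    have ct : ∀ e : ℝ × ℝ, Continuous (fun p => fderiv ℝ Z p e) := fun e =>
      (hZ1.continuous_fderiv one_ne_zero).clm_apply continuous_const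
    have cs : ∀ e : ℝ × ℝ, HasCompactSupport (fun p => fderiv ℝ Z p e) := fun e =>
      hZc.fderiv_apply ℝ _
    have k1 := integrable_mul_test iu (ct (0, 1)) (cs (0, 1))
    have k2 := integrable_mul_test hSi (ct (1, 0)) (cs (1, 0))
    have k3 := integrable_mul_test iQ hZ1.continuous hZc
    have k4 : IntegrableOn (fun p => R p * fderiv ℝ Z p (1, 0)) (OmegaT T) :=
      integrable_mul_test iR (ct (1, 0)) (cs (1, 0))
    have ib : ∫ p in OmegaT T, R p * fderiv ℝ Z p (1, 0) = - ∫ p in OmegaT T,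
        (b p.1 p.2 * ux p.1 p.2 + c p.1 p.2 * u p.1 p.2 + f p.1 p.2) * Z p :=
      ibpx (H := R) (H1 := fun p => b p.1 p.2 * ux p.1 p.2 + c p.1 p.2 * u p.1 p.2 + f p.1 p.2)
        iR iQ Rac Rd hZ1 hZc hZs
    have e1 : ∀ p : ℝ × ℝ, (u p.1 p.2 * deriv (fun τ => Z (p.1, τ)) p.2
            - sigma (ux p.1 p.2) * deriv (fun y => Z (y, p.2)) p.1
            + (b p.1 p.2 * ux p.1 p.2 + c p.1 p.2 * u p.1 p.2 + f p.1 p.2) * Z (p.1, p.2)) =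
        u p.1 p.2 * fderiv ℝ Z p (0, 1) - sigma (ux p.1 p.2) * fderiv ℝ Z p (1, 0)
          + (b p.1 p.2 * ux p.1 p.2 + c p.1 p.2 * u p.1 p.2 + f p.1 p.2) * Z p := by
      intro p
      rw [(zt_eq hZd p.1 p.2).deriv, (zx_eq hZd p.1 p.2).deriv]
    have e2 : ∫ p in OmegaT T, g p * fderiv ℝ Z p (1, 0) =
        (∫ p in OmegaT T, sigma (ux p.1 p.2) * fderiv ℝ Z p (1, 0)) +
          ∫ p in OmegaT T, R p * fderiv ℝ Z p (1, 0) := by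
      rw [← integral_add k2 k4]
      congr 1
      funext p
      rw [hgR]; ring
    simp_rw [e1]
    have k12 : IntegrableOn (fun p : ℝ × ℝ => u p.1 p.2 * fderiv ℝ Z p (0, 1)
        - sigma (ux p.1 p.2) * fderiv ℝ Z p (1, 0)) (OmegaT T) := Integrable.sub k1 k2
    rw [integral_add k12 k3, integral_sub k1 k2, e2, ib]
    ring
  have str : ∀ v, IsStreamFunction T sigma b bx c f u ux v → 
      (∃ L : ℝ≥0, LipschitzOnWith L (fun p : ℝ × ℝ => v p.1 p.2) (ClOmegaT T)) ∧
      (∀ᵐ p ∂(volume.restrict (OmegaT T)), HasDerivAt (fun y => v y p.2) (u p.1 p.2) p.1) ∧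
      (∀ᵐ p ∂(volume.restrict (OmegaT T)), HasDerivAt (fun τ => v p.1 τ) (g p) p.2) := by
    rintro v ⟨hL, vx, vt, h1, h2, h3, h4⟩
    refine ⟨hL, ?_, ?_⟩
    · filter_upwards [h1, h3] with p h1 h3
      rwa [h3] at h1
    · filter_upwards [h2, h4] with p h2 h4
      rwa [h4] at h2
  refine ⟨⟨fun H => ?_, ?_⟩, ?_⟩
  · have h0 : ∀ Z : ℝ × ℝ → ℝ, ContDiff ℝ (⊤ : ℕ∞) Z → HasCompactSupport Z → tsupport Z ⊆ OmegaT T →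
        ∫ p in OmegaT T, u p.1 p.2 * fderiv ℝ Z p (0, 1) = ∫ p in OmegaT T, g p * fderiv ℝ Z p (1, 0) := by
      intro Z hZ hZc hZs
      have h1 := H (fun x t => Z (x, t)) hZ hZc hZs
      have h2 := key Z hZ hZc hZs
      rw [h1] at h2
      linarith
    obtain ⟨v, L, hL, hx, ht⟩ := exists_stream hT hu ig gb h0
    exact ⟨fun x t => v (x, t), ⟨L, hL⟩, u, fun x t => g (x, t), hx, ht,
      ae_of_all _ fun p => rfl, ae_of_all _ fun p => rfl⟩
  · rintro ⟨v, hv⟩ ζ hζ hζc hζs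
    obtain ⟨⟨L, hL⟩, hx, ht⟩ := str v hv
    have h1 := key (fun p => ζ p.1 p.2) hζ hζc hζs
    have h2 := curl_free (Vx := fun p => u p.1 p.2) (Vt := g) hT hL hx ht
      ((contDiff_infty.mp hζ) 2) hζc hζs
    refine h1.trans ?_
    rw [h2, sub_self]
  · intro v w hv hw
    obtain ⟨⟨L, hL⟩, hx, ht⟩ := str v hv
    obtain ⟨⟨L2, hL2⟩, hx2, ht2⟩ := str w hw
    obtain ⟨k, hk⟩ := const_of_grad_zero (V := fun p => v p.1 p.2 - w p.1 p.2) hT (hL.sub hL2)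
      (by
        filter_upwards [hx, hx2] with p h1 h2
        have := h1.sub h2
        rw [sub_self] at this
        exact this)
      (by
        filter_upwards [ht, ht2] with p h1 h2
        have := h1.sub h2
        rw [sub_self] at this
        exact this)
    refine ⟨k, fun p hp => ?_⟩
    have := hk p hp
    linarith
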